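/- Let α ∈ (1,2), T > 0, L > 0, and let f : [0,T] × ℝ → ℝ be continuous with |f(t,x) − f(t,y)| ≤ L|x − y| for all t, x, y, and with f(t,0) = 0 for all t ∈ [0,T]. For t ∈ [0,T] define a₋(t) := inf{ f(τ,x)/x : τ ∈ [0,t], x ≠ 0 } and a*(t) := sup{ f(τ,x)/x : τ ∈ [0,t], x ≠ 0 }. Let y : [0,T] → ℝ be continuous with y(t) = y₀ + y₁ t + (1/Γ(α)) ∫₀ᵗ (t−s)^{α−1} f(s, y(s)) ds for all t, where y₀ ≥ 0 and y₁ ≥ 0. Suppose T* ∈ (0,T] is such that for all t ∈ [0,T*]: E_{α,α}(−L t^α) > 0, E_{α,2}(−L t^α) > 0, and (E_{α,1}(−L t^α) > 0 or y₀ = 0). Then for all t ∈ [0,T*]: y₀ E_{α,1}(a₋(t) t^α) + y₁ t E_{α,2}(a₋(t) t^α) ≤ y(t) ≤ y₀ E_{α,1}(a*(t) t^α) + y₁ t E_{α,2}(a*(t) t^α). -/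

import Mathlib

/-- The two-parameter Mittag-Leffler function `E_{α,β}(z) = ∑ₖ zᵏ / Γ(αk + β)`. -/
noncomputable def mlE (α β z : ℝ) : ℝ := ∑' k : ℕ, z ^ k / Real.Gamma (α * k + β)

/-!
The Mittag-Leffler kernel `K(u) = u ^ (α - 1) E_{α,α}(lam u ^ α)` is the resolvent of the
Riemann-Liouville kernel `u ^ (α - 1) / Γ(α)`. Convolving the Volterra equation with `K` therefore
shows, for every rate `lam`, that `y` is the solution of the linear equation `D^α u = lam u` plus
`K ∗ (f(·, y) - lam y)`. For `lam = -L` the correction is at least `-2L (K ∗ y⁻)`, so Gronwall's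
lemma applied to the negative part `y⁻` gives `y ≥ 0`. For `lam = a₋(t)` and `lam = a*(t)` the
correction then has a constant sign as soon as `K ≥ 0`, and this positivity is inherited by all
`lam ≥ -L` from `lam = -L`.
-/

open MeasureTheory Set Function

/-! ### The Mittag-Leffler function -/

theorem exp_neg_mul_rpow_le_Gamma {R x : ℝ} (hR : 0 < R) (hx : 1 ≤ x) :
    Real.exp (-(R + 1)) * R ^ (x - 1) ≤ Real.Gamma x := by
  have hint := Real.GammaIntegral_convergent (zero_lt_one.trans_le hx)
  have hsub : Ioc R (R + 1) ⊆ Ioi 0 := fun t ht => hR.trans ht.1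
  calc Real.exp (-(R + 1)) * R ^ (x - 1)
      = ∫ _ in Ioc R (R + 1), Real.exp (-(R + 1)) * R ^ (x - 1) := by simp
    _ ≤ ∫ t in Ioc R (R + 1), Real.exp (-t) * t ^ (x - 1) := by
        refine setIntegral_mono_on (integrableOn_const (by simp)) (hint.mono_set hsub)
          measurableSet_Ioc fun t ht => ?_
        gcongr
        exacts [ht.2, ht.1.le]
    _ ≤ ∫ t in Ioi 0, Real.exp (-t) * t ^ (x - 1) :=
        setIntegral_mono_set hint
          (ae_restrict_of_forall_mem measurableSet_Ioi fun t ht =>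
            mul_nonneg (Real.exp_nonneg _) (Real.rpow_nonneg (le_of_lt ht) _))
          hsub.eventuallyLE
    _ = Real.Gamma x := (Real.Gamma_eq_integral (zero_lt_one.trans_le hx)).symm

theorem summable_mlE {α : ℝ} (hα : 0 < α) (β z : ℝ) :
    Summable fun k : ℕ => z ^ k / Real.Gamma (α * k + β) := by
  obtain ⟨R, hR, hRα⟩ : ∃ R : ℝ, 0 < R ∧ R ^ α = |z| + 1 :=
    ⟨(|z| + 1) ^ α⁻¹, by positivity, Real.rpow_inv_rpow (by positivity) hα.ne'⟩
  have hratio : |z| / (|z| + 1) < 1 := (div_lt_one (by positivity)).2 (lt_add_one _)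
  refine Summable.of_norm_bounded_eventually_nat
    (g := fun k => (|z| / (|z| + 1)) ^ k * (Real.exp (R + 1) / R ^ (β - 1)))
    ((summable_geometric_of_lt_one (by positivity) hratio).mul_right _) ?_
  filter_upwards [(tendsto_natCast_atTop_atTop.const_mul_atTop hα).eventually_ge_atTop (1 - β)]
    with k hk
  have hΓ := exp_neg_mul_rpow_le_Gamma hR (x := α * k + β) (by linarith)
  have hpow : R ^ (α * k + β - 1) = (|z| + 1) ^ k * R ^ (β - 1) := by
    rw [add_sub_assoc, Real.rpow_add hR, Real.rpow_mul_natCast hR.le, hRα]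
  rw [hpow] at hΓ
  calc ‖z ^ k / Real.Gamma (α * k + β)‖ = |z| ^ k / Real.Gamma (α * k + β) := by
        rw [norm_div, norm_pow, Real.norm_eq_abs,
          Real.norm_of_nonneg (Real.Gamma_nonneg_of_nonneg (by linarith))]
    _ ≤ |z| ^ k / (Real.exp (-(R + 1)) * ((|z| + 1) ^ k * R ^ (β - 1))) := by gcongr
    _ = (|z| / (|z| + 1)) ^ k * (Real.exp (R + 1) / R ^ (β - 1)) := by
        rw [Real.exp_neg, div_pow]
        field_simp

theorem mlE_eq_inv_Gamma_add {α : ℝ} (hα : 0 < α) (β z : ℝ) :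
    mlE α β z = (Real.Gamma β)⁻¹ + z * mlE α (α + β) z := by
  unfold mlE
  rw [(summable_mlE hα β z).tsum_eq_zero_add, ← tsum_mul_left]
  congr 1
  · simp
  · refine tsum_congr fun k => ?_
    rw [Nat.cast_succ, mul_add_one, add_assoc, pow_succ', mul_div_assoc]

theorem continuous_mlE {α : ℝ} (hα : 0 < α) (β : ℝ) : Continuous (mlE α β) := by
  refine continuous_iff_continuousAt.2 fun z => ?_
  have hball : ContinuousOn (mlE α β) (Metric.ball 0 (|z| + 1)) := by
    refine continuousOn_tsum (fun k => by fun_prop) (summable_mlE hα β (|z| + 1)).norm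
      fun k x hx => ?_
    rw [mem_ball_zero_iff, Real.norm_eq_abs] at hx
    rw [norm_div, norm_div, norm_pow, norm_pow, Real.norm_eq_abs x,
      Real.norm_of_nonneg (by positivity : 0 ≤ |z| + 1)]
    gcongr
  exact hball.continuousAt (Metric.isOpen_ball.mem_nhds (by simp))

theorem mlE_nonneg {α β z : ℝ} (hα : 0 ≤ α) (hβ : 0 ≤ β) (hz : 0 ≤ z) : 0 ≤ mlE α β z :=
  tsum_nonneg fun _ => div_nonneg (pow_nonneg hz _) (Real.Gamma_nonneg_of_nonneg (by positivity))

/-- A smaller rate `-lam ≤ L` only rescales time: `lam u ^ α = -L (θ u) ^ α` with `θ ≤ 1`. -/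
theorem mlE_mul_rpow_nonneg_of_neg_le {α β L lam b : ℝ} (hα : 0 < α) (hβ : 0 ≤ β)
    (hL : ∀ u ∈ Icc 0 b, 0 ≤ mlE α β (-L * u ^ α)) (hlam : -L ≤ lam) :
    ∀ u ∈ Icc 0 b, 0 ≤ mlE α β (lam * u ^ α) := by
  intro u hu
  rcases le_or_gt 0 lam with hpos | hneg
  · exact mlE_nonneg hα.le hβ (mul_nonneg hpos (Real.rpow_nonneg hu.1 _))
  have hL0 : 0 < L := by linarith
  have hratio : 0 ≤ -lam / L := div_nonneg (by linarith) hL0.le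
  set θ := (-lam / L) ^ α⁻¹ with hθ
  have hθ0 : 0 ≤ θ := Real.rpow_nonneg hratio _
  have hθ1 : θ ≤ 1 :=
    Real.rpow_le_one hratio ((div_le_one hL0).2 (by linarith)) (inv_nonneg.2 hα.le)
  have hscale : -L * (θ * u) ^ α = lam * u ^ α := by
    rw [Real.mul_rpow hθ0 hu.1, hθ, Real.rpow_inv_rpow hratio hα.ne']
    field_simp
  rw [← hscale]
  exact hL _ ⟨mul_nonneg hθ0 hu.1, (mul_le_of_le_one_left hu.1 hθ1).trans hu.2⟩

/-! ### Volterra convolution -/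

theorem isCompact_triangle (a b : ℝ) :
    IsCompact {p : ℝ × ℝ | a ≤ p.2 ∧ p.2 ≤ p.1 ∧ p.1 ≤ b} := by
  refine ((isCompact_Icc (a := a) (b := b)).prod
    (isCompact_Icc (a := a) (b := b))).of_isClosed_subset ?_
      fun p hp => ⟨⟨hp.1.trans hp.2.1, hp.2.2⟩, ⟨hp.1, hp.2.1.trans hp.2.2⟩⟩
  exact (isClosed_le continuous_const continuous_snd).inter
    ((isClosed_le continuous_snd continuous_fst).inter
      (isClosed_le continuous_fst continuous_const))

theorem integral_integral_triangle_swap {E : Type*} [NormedAddCommGroup E] [NormedSpace ℝ E]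
    {a b : ℝ} (hab : a ≤ b) {f : ℝ → ℝ → E}
    (hf : ContinuousOn (uncurry f) {p | a ≤ p.2 ∧ p.2 ≤ p.1 ∧ p.1 ≤ b}) :
    ∫ s in a..b, ∫ r in a..s, f s r = ∫ r in a..b, ∫ s in r..b, f s r := by
  set Δ : Set (ℝ × ℝ) := {p | a ≤ p.2 ∧ p.2 ≤ p.1 ∧ p.1 ≤ b} with hΔ
  have hint : Integrable (uncurry fun s r => Δ.indicator (uncurry f) (s, r))
      (volume.prod volume) :=
    (hf.integrableOn_compact (isCompact_triangle a b)).integrable_indicator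
      (isCompact_triangle a b).measurableSet
  have hrow : ∀ s, ∫ r, Δ.indicator (uncurry f) (s, r)
      = (Icc a b).indicator (fun s => ∫ r in a..s, f s r) s := by
    intro s
    by_cases hs : s ∈ Icc a b
    · rw [indicator_of_mem hs, intervalIntegral.integral_of_le hs.1, ← integral_Icc_eq_integral_Ioc,
        ← integral_indicator measurableSet_Icc]
      refine integral_congr_ae (.of_forall fun r => ?_)
      simp only [indicator_apply, hΔ, mem_ofPred_eq, mem_Icc, hs.2, and_true, uncurry]
    · rw [indicator_of_notMem hs, integral_eq_zero_of_ae (.of_forall fun r => ?_)]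
      exact indicator_of_notMem (fun hr => hs ⟨hr.1.trans hr.2.1, hr.2.2⟩) _
  have hcol : ∀ r, ∫ s, Δ.indicator (uncurry f) (s, r)
      = (Icc a b).indicator (fun r => ∫ s in r..b, f s r) r := by
    intro r
    by_cases hr : r ∈ Icc a b
    · rw [indicator_of_mem hr, intervalIntegral.integral_of_le hr.2, ← integral_Icc_eq_integral_Ioc,
        ← integral_indicator measurableSet_Icc]
      refine integral_congr_ae (.of_forall fun s => ?_)
      simp only [indicator_apply, hΔ, mem_ofPred_eq, mem_Icc, hr.1, true_and, uncurry]
    · rw [indicator_of_notMem hr, integral_eq_zero_of_ae (.of_forall fun s => ?_)]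
      exact indicator_of_notMem (fun hs => hr ⟨hs.1, hs.2.1.trans hs.2.2⟩) _
  have hswap := integral_integral_swap hint
  simp only [hrow, hcol] at hswap
  rwa [integral_indicator measurableSet_Icc, integral_indicator measurableSet_Icc,
    integral_Icc_eq_integral_Ioc, integral_Icc_eq_integral_Ioc,
    ← intervalIntegral.integral_of_le hab, ← intervalIntegral.integral_of_le hab] at hswap

/-- The Volterra convolution `(k ∗ F)(t) = ∫₀ᵗ k(t - s) F(s) ds` of functions on the half-line
`[0, ∞)`; the values at negative arguments play no role for `0 ≤ t`. -/
noncomputable def volterraConv (k F : ℝ → ℝ) (t : ℝ) : ℝ := ∫ s in (0 : ℝ)..t, k (t - s) * F s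

section VolterraConv

variable {k k₁ k₂ F F₁ F₂ : ℝ → ℝ} {t : ℝ}

theorem volterraConv_comm (k F : ℝ → ℝ) (t : ℝ) : volterraConv k F t = volterraConv F k t := by
  have h := intervalIntegral.integral_comp_sub_left (a := 0) (b := t)
    (fun s => F (t - s) * k s) t
  simp only [sub_sub_cancel, sub_self, sub_zero] at h
  rw [volterraConv, volterraConv, ← h]
  simp only [mul_comm]

theorem volterraConv_congr_right (ht : 0 ≤ t) (h : EqOn F₁ F₂ (Icc 0 t)) :
    volterraConv k F₁ t = volterraConv k F₂ t :=
  intervalIntegral.integral_congr fun s hs => by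
    rw [uIcc_of_le ht] at hs
    simp only [h hs]

theorem volterraConv_nonneg (ht : 0 ≤ t) (hk : ∀ u ∈ Icc 0 t, 0 ≤ k u)
    (hF : ∀ s ∈ Icc 0 t, 0 ≤ F s) : 0 ≤ volterraConv k F t :=
  intervalIntegral.integral_nonneg ht fun s hs =>
    mul_nonneg (hk _ ⟨sub_nonneg.2 hs.2, sub_le_self _ hs.1⟩) (hF s hs)

theorem volterraConv_const_mul (k F : ℝ → ℝ) (c t : ℝ) :
    volterraConv k (fun s => c * F s) t = c * volterraConv k F t := by
  simp only [volterraConv, mul_left_comm _ c, intervalIntegral.integral_const_mul]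

theorem continuousOn_volterra_integrand (hk : ContinuousOn k (Icc 0 t))
    (hF : ContinuousOn F (Icc 0 t)) : ContinuousOn (fun s => k (t - s) * F s) (Icc 0 t) :=
  (hk.comp (by fun_prop) fun _ hs => ⟨sub_nonneg.2 hs.2, sub_le_self _ hs.1⟩).mul hF

theorem volterraConv_add (ht : 0 ≤ t) (hk : ContinuousOn k (Icc 0 t))
    (hF₁ : ContinuousOn F₁ (Icc 0 t)) (hF₂ : ContinuousOn F₂ (Icc 0 t)) :
    volterraConv k (fun s => F₁ s + F₂ s) t = volterraConv k F₁ t + volterraConv k F₂ t := by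
  simp only [volterraConv, mul_add]
  exact intervalIntegral.integral_add
    ((continuousOn_volterra_integrand hk hF₁).intervalIntegrable_of_Icc ht)
    ((continuousOn_volterra_integrand hk hF₂).intervalIntegrable_of_Icc ht)

theorem volterraConv_sub (ht : 0 ≤ t) (hk : ContinuousOn k (Icc 0 t))
    (hF₁ : ContinuousOn F₁ (Icc 0 t)) (hF₂ : ContinuousOn F₂ (Icc 0 t)) :
    volterraConv k (fun s => F₁ s - F₂ s) t = volterraConv k F₁ t - volterraConv k F₂ t := by
  simp only [volterraConv, mul_sub]
  exact intervalIntegral.integral_sub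
    ((continuousOn_volterra_integrand hk hF₁).intervalIntegrable_of_Icc ht)
    ((continuousOn_volterra_integrand hk hF₂).intervalIntegrable_of_Icc ht)

theorem volterraConv_assoc (ht : 0 ≤ t) (hk₁ : ContinuousOn k₁ (Icc 0 t))
    (hk₂ : ContinuousOn k₂ (Icc 0 t)) (hF : ContinuousOn F (Icc 0 t)) :
    volterraConv k₁ (volterraConv k₂ F) t = volterraConv (volterraConv k₁ k₂) F t := by
  have hcont : ContinuousOn (uncurry fun s r => k₁ (t - s) * (k₂ (s - r) * F r))
      {p | 0 ≤ p.2 ∧ p.2 ≤ p.1 ∧ p.1 ≤ t} := by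
    refine (hk₁.comp (by fun_prop) fun p hp => ?_).mul
      ((hk₂.comp (by fun_prop) fun p hp => ?_).mul (hF.comp (by fun_prop) fun p hp => ?_))
    all_goals
      obtain ⟨h₀, h₁, h₂⟩ := hp
      constructor <;> linarith
  calc volterraConv k₁ (volterraConv k₂ F) t
      = ∫ s in (0 : ℝ)..t, ∫ r in (0 : ℝ)..s, k₁ (t - s) * (k₂ (s - r) * F r) := by
        simp only [volterraConv, intervalIntegral.integral_const_mul]
    _ = ∫ r in (0 : ℝ)..t, ∫ s in r..t, k₁ (t - s) * (k₂ (s - r) * F r) :=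
        integral_integral_triangle_swap ht hcont
    _ = ∫ r in (0 : ℝ)..t, (∫ s in r..t, k₁ (t - r - (s - r)) * k₂ (s - r)) * F r := by
        simp only [sub_sub_sub_cancel_right, ← mul_assoc, intervalIntegral.integral_mul_const]
    _ = volterraConv (volterraConv k₁ k₂) F t := by
        refine intervalIntegral.integral_congr fun r _ => ?_
        simp only [volterraConv]
        rw [intervalIntegral.integral_comp_sub_right (fun u => k₁ (t - r - u) * k₂ u), sub_self]

/-- If `K = g + lam (K ∗ g)` is the resolvent of `g`, convolving `y = h + g ∗ F` with `K` trades
the kernel `g` for `K` at the cost of replacing `F` by `F - lam y`. -/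
theorem eq_add_volterraConv_resolvent {g K h y : ℝ → ℝ} {lam : ℝ} (ht : 0 ≤ t)
    (hg : ContinuousOn g (Icc 0 t)) (hK : ContinuousOn K (Icc 0 t))
    (hh : ContinuousOn h (Icc 0 t)) (hF : ContinuousOn F (Icc 0 t))
    (hyc : ContinuousOn y (Icc 0 t))
    (hres : ∀ u ∈ Icc 0 t, K u = g u + lam * volterraConv K g u)
    (hy : ∀ s ∈ Icc 0 t, y s = h s + volterraConv g F s) :
    y t = h t + lam * volterraConv K h t + volterraConv K (fun s => F s - lam * y s) t := by
  have hKgF : volterraConv K (volterraConv g F) t = volterraConv K y t - volterraConv K h t := by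
    rw [← volterraConv_sub ht hK hyc hh]
    exact volterraConv_congr_right ht fun s hs => by simp [hy s hs]
  have hswap : lam * volterraConv K (volterraConv g F) t
      = volterraConv K F t - volterraConv g F t := by
    rw [volterraConv_assoc ht hK hg hF, volterraConv_comm _ F, ← volterraConv_const_mul,
      volterraConv_comm K F, volterraConv_comm g F, ← volterraConv_sub ht hF hK hg]
    exact volterraConv_congr_right ht fun u hu => by simp [hres u hu]
  rw [volterraConv_sub ht hK hF (hyc.const_mul lam), volterraConv_const_mul, hy t ⟨ht, le_rfl⟩]
  linear_combination hswap - lam * hKgF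

end VolterraConv

/-! ### Riemann-Liouville and Mittag-Leffler kernels -/

/-- The Riemann-Liouville kernel `u ^ (γ - 1) / Γ(γ)`; convolution with it is the fractional
integral of order `γ`. -/
noncomputable def rlKernel (γ u : ℝ) : ℝ := u ^ (γ - 1) / Real.Gamma γ

/-- The Mittag-Leffler kernel `u ^ (γ - 1) E_{α,γ}(lam u ^ α)`. For `γ = α` it is the resolvent of
the Riemann-Liouville kernel of order `α`. -/
noncomputable def mlKernel (α γ lam u : ℝ) : ℝ := u ^ (γ - 1) * mlE α γ (lam * u ^ α)

section Kernels

variable {α β γ : ℝ}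

theorem rlKernel_nonneg {u : ℝ} (hγ : 0 ≤ γ) (hu : 0 ≤ u) : 0 ≤ rlKernel γ u :=
  div_nonneg (Real.rpow_nonneg hu _) (Real.Gamma_nonneg_of_nonneg hγ)

theorem rlKernel_pos {u : ℝ} (hγ : 0 < γ) (hu : 0 < u) : 0 < rlKernel γ u :=
  div_pos (Real.rpow_pos_of_pos hu _) (Real.Gamma_pos_of_pos hγ)

theorem continuous_rlKernel (hγ : 1 ≤ γ) : Continuous (rlKernel γ) :=
  (Real.continuous_rpow_const (sub_nonneg.2 hγ)).div_const _

theorem continuous_mlKernel (hα : 0 < α) (hγ : 1 ≤ γ) (lam : ℝ) :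
    Continuous (mlKernel α γ lam) :=
  (Real.continuous_rpow_const (sub_nonneg.2 hγ)).mul <|
    (continuous_mlE hα γ).comp <| (Real.continuous_rpow_const hα.le).const_mul lam

theorem volterraConv_rlKernel (F : ℝ → ℝ) (t : ℝ) : volterraConv (rlKernel γ) F t
    = 1 / Real.Gamma γ * ∫ s in (0 : ℝ)..t, (t - s) ^ (γ - 1) * F s := by
  rw [volterraConv, ← intervalIntegral.integral_const_mul]
  refine intervalIntegral.integral_congr fun s _ => ?_
  simp only [rlKernel]
  ring

theorem integral_rpow_mul_sub_rpow {t : ℝ} (hβ : 0 < β) (hγ : 0 < γ) (ht : 0 < t) :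
    ∫ s in (0 : ℝ)..t, s ^ (β - 1) * (t - s) ^ (γ - 1)
      = t ^ (β + γ - 1) * (Real.Gamma β * Real.Gamma γ / Real.Gamma (β + γ)) := by
  have hbeta := Complex.betaIntegral_scaled β γ ht
  rw [Complex.betaIntegral_eq_Gamma_mul_div _ _ (by simpa) (by simpa)] at hbeta
  have hreal : ∫ s in (0 : ℝ)..t, (s : ℂ) ^ ((β : ℂ) - 1) * ((t : ℂ) - s) ^ ((γ : ℂ) - 1)
      = ((∫ s in (0 : ℝ)..t, s ^ (β - 1) * (t - s) ^ (γ - 1) : ℝ) : ℂ) := by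
    rw [← intervalIntegral.integral_ofReal]
    refine intervalIntegral.integral_congr fun s hs => ?_
    rw [uIcc_of_le ht.le] at hs
    simp [Complex.ofReal_cpow hs.1, Complex.ofReal_cpow (sub_nonneg.2 hs.2)]
  have hpow : (t : ℂ) ^ ((β : ℂ) + γ - 1) = ((t ^ (β + γ - 1) : ℝ) : ℂ) := by
    simp [Complex.ofReal_cpow ht.le]
  rw [hreal, hpow, ← Complex.ofReal_add, Complex.Gamma_ofReal, Complex.Gamma_ofReal,
    Complex.Gamma_ofReal] at hbeta
  exact_mod_cast hbeta

theorem volterraConv_rlKernel_rlKernel {t : ℝ} (hβ : 0 < β) (hγ : 0 < γ) (ht : 0 < t) :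
    volterraConv (rlKernel β) (rlKernel γ) t = rlKernel (γ + β) t := by
  calc volterraConv (rlKernel β) (rlKernel γ) t
      = (∫ s in (0 : ℝ)..t, s ^ (γ - 1) * (t - s) ^ (β - 1))
          / (Real.Gamma γ * Real.Gamma β) := by
        rw [volterraConv, ← intervalIntegral.integral_div]
        refine intervalIntegral.integral_congr fun s _ => ?_
        simp only [rlKernel, div_mul_div_comm]
        ring
    _ = rlKernel (γ + β) t := by
        rw [integral_rpow_mul_sub_rpow hγ hβ ht, rlKernel]
        field_simp

theorem integrableOn_rlKernel_mul_rlKernel {t : ℝ} (hβ : 0 < β) (hγ : 0 < γ) (ht : 0 < t) :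
    IntegrableOn (fun s => rlKernel β (t - s) * rlKernel γ s) (Ioc 0 t) := by
  refine (intervalIntegrable_iff_integrableOn_Ioc_of_le ht.le).1
    (intervalIntegral.intervalIntegrable_of_integral_ne_zero ?_)
  rw [← volterraConv, volterraConv_rlKernel_rlKernel hβ hγ ht]
  exact (rlKernel_pos (add_pos hγ hβ) ht).ne'

theorem hasSum_mlKernel {u : ℝ} (hα : 0 < α) (γ lam : ℝ) (hu : 0 < u) :
    HasSum (fun k : ℕ => lam ^ k * rlKernel (α * k + γ) u) (mlKernel α γ lam u) := by
  refine ((summable_mlE hα γ (lam * u ^ α)).hasSum.mul_left (u ^ (γ - 1))).congr_fun fun k => ?_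
  rw [rlKernel, add_sub_assoc, Real.rpow_add hu, Real.rpow_mul_natCast hu.le, mul_pow]
  ring

/-- Integrating the series of the Mittag-Leffler kernel term by term, each term is shifted by the
semigroup property of the Riemann-Liouville kernels. -/
theorem volterraConv_rlKernel_mlKernel {t : ℝ} (hα : 0 < α) (hβ : 0 < β) (hγ : 0 < γ)
    (lam : ℝ) (ht : 0 < t) :
    volterraConv (rlKernel β) (mlKernel α γ lam) t = mlKernel α (γ + β) lam t := by
  have horder (k : ℕ) : 0 < α * k + γ := by positivity
  have hterm (c : ℝ) (k : ℕ) :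
      ∫ s in Ioc 0 t, rlKernel β (t - s) * (c ^ k * rlKernel (α * k + γ) s)
        = c ^ k * rlKernel (α * k + (γ + β)) t := by
    rw [← add_assoc, ← volterraConv_rlKernel_rlKernel hβ (horder k) ht, ← volterraConv_const_mul,
      volterraConv, intervalIntegral.integral_of_le ht.le]
  have hint (k : ℕ) : Integrable
      (fun s => rlKernel β (t - s) * (lam ^ k * rlKernel (α * k + γ) s))
      (volume.restrict (Ioc 0 t)) := by
    simpa only [mul_left_comm] using
      (integrableOn_rlKernel_mul_rlKernel hβ (horder k) ht).const_mul (lam ^ k)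
  have hnorm (k : ℕ) :
      ∫ s in Ioc 0 t, ‖rlKernel β (t - s) * (lam ^ k * rlKernel (α * k + γ) s)‖
        = |lam| ^ k * rlKernel (α * k + (γ + β)) t := by
    rw [← hterm]
    refine setIntegral_congr_fun measurableSet_Ioc fun s hs => ?_
    simp only [norm_mul, norm_pow, Real.norm_eq_abs,
      abs_of_nonneg (rlKernel_nonneg hβ.le (sub_nonneg.2 hs.2)),
      abs_of_nonneg (rlKernel_nonneg (horder k).le hs.1.le)]
  have hsum := hasSum_integral_of_summable_integral_norm hint <| by
    simpa only [hnorm] using (hasSum_mlKernel hα (γ + β) |lam| ht).summable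
  simp only [hterm] at hsum
  rw [← hsum.unique (hasSum_mlKernel hα (γ + β) lam ht), volterraConv,
    intervalIntegral.integral_of_le ht.le]
  exact setIntegral_congr_fun measurableSet_Ioc fun s hs =>
    ((hasSum_mlKernel hα γ lam hs.1).mul_left _).tsum_eq.symm

theorem mlKernel_eq_rlKernel_add_volterraConv {u : ℝ} (hα : 0 < α) (hγ : 0 < γ) (lam : ℝ)
    (hu : 0 ≤ u) :
    mlKernel α γ lam u = rlKernel γ u + lam * volterraConv (mlKernel α α lam) (rlKernel γ) u := by
  rcases hu.eq_or_lt with rfl | hpos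
  · simp [mlKernel, rlKernel, volterraConv, Real.zero_rpow hα.ne', mlE_eq_inv_Gamma_add hα γ 0,
      div_eq_mul_inv]
  · rw [volterraConv_comm, volterraConv_rlKernel_mlKernel hα hγ hα lam hpos, mlKernel, mlKernel,
      rlKernel, mlE_eq_inv_Gamma_add hα γ, add_sub_assoc, Real.rpow_add hpos]
    ring

end Kernels

/-! ### Linear and nonlinear Caputo problems -/

/-- The solution `y₀ E_{α,1}(lam t ^ α) + y₁ t E_{α,2}(lam t ^ α)` of the linear Caputo problem
`D^α u = lam u`, `u 0 = y₀`, `u' 0 = y₁`. -/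
noncomputable def linearSolution (α lam y₀ y₁ t : ℝ) : ℝ :=
  y₀ * mlE α 1 (lam * t ^ α) + y₁ * (t * mlE α 2 (lam * t ^ α))

theorem linearSolution_eq_volterraConv {α t : ℝ} (hα : 1 ≤ α) (lam y₀ y₁ : ℝ) (ht : 0 ≤ t) :
    linearSolution α lam y₀ y₁ t = y₀ + y₁ * t +
      lam * volterraConv (mlKernel α α lam) (fun s => y₀ + y₁ * s) t := by
  have hα0 : 0 < α := zero_lt_one.trans_le hα
  have hK := (continuous_mlKernel hα0 hα lam).continuousOn (s := Icc 0 t)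
  have hone : rlKernel 1 = fun _ => 1 := by ext; simp [rlKernel]
  have hid : rlKernel 2 = fun u => u := by ext; norm_num [rlKernel]
  have h₁ := mlKernel_eq_rlKernel_add_volterraConv hα0 one_pos lam ht
  have h₂ := mlKernel_eq_rlKernel_add_volterraConv hα0 two_pos lam ht
  have hlin : volterraConv (mlKernel α α lam) (fun s => y₀ + y₁ * s) t
      = y₀ * volterraConv (mlKernel α α lam) (rlKernel 1) t
        + y₁ * volterraConv (mlKernel α α lam) (rlKernel 2) t := by
    rw [← volterraConv_const_mul, ← volterraConv_const_mul,
      ← volterraConv_add ht hK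
        ((continuous_rlKernel le_rfl).const_mul y₀).continuousOn
        ((continuous_rlKernel one_le_two).const_mul y₁).continuousOn]
    simp only [hone, hid, mul_one]
  have e₁ : mlKernel α 1 lam t = mlE α 1 (lam * t ^ α) := by simp [mlKernel]
  have e₂ : mlKernel α 2 lam t = t * mlE α 2 (lam * t ^ α) := by norm_num [mlKernel]
  rw [linearSolution, ← e₁, ← e₂, h₁, h₂, hlin]
  simp only [hone, hid]
  ring

theorem linearSolution_nonneg {α lam y₀ y₁ t : ℝ} (ht : 0 ≤ t) (hy₀ : 0 ≤ y₀) (hy₁ : 0 ≤ y₁)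
    (h₁ : 0 ≤ mlE α 1 (lam * t ^ α) ∨ y₀ = 0) (h₂ : 0 ≤ mlE α 2 (lam * t ^ α)) :
    0 ≤ linearSolution α lam y₀ y₁ t := by
  refine add_nonneg ?_ (mul_nonneg hy₁ (mul_nonneg ht h₂))
  rcases h₁ with h₁ | rfl
  exacts [mul_nonneg hy₀ h₁, (zero_mul _).ge]

/-- `y` is a continuous solution on `[0, b]` of the Caputo problem `D^α y = F`, `y 0 = y₀`,
`y' 0 = y₁` with continuous right-hand side, encoded by the equivalent Volterra integral
equation. For a nonlinear equation, `F s = f s (y s)`. -/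
structure IsCaputoSolution (α y₀ y₁ b : ℝ) (F y : ℝ → ℝ) : Prop where
  continuousOn_rhs : ContinuousOn F (Icc 0 b)
  continuousOn : ContinuousOn y (Icc 0 b)
  eq_add_integral : ∀ t ∈ Icc 0 b, y t = y₀ + y₁ * t
    + (1 / Real.Gamma α) * ∫ s in (0 : ℝ)..t, (t - s) ^ (α - 1) * F s

theorem eqOn_zero_of_le_mul_integral {w : ℝ → ℝ} {C a b : ℝ} (hw : ContinuousOn w (Icc a b))
    (hw0 : ∀ t ∈ Icc a b, 0 ≤ w t) (hle : ∀ t ∈ Icc a b, w t ≤ C * ∫ s in a..t, w s) :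
    EqOn w 0 (Icc a b) := by
  intro t ht
  have hab : a ≤ b := ht.1.trans ht.2
  have hwi : ∀ x ∈ Icc a b, IntervalIntegrable w volume a x := fun x hx =>
    (hw.mono (Icc_subset_Icc_right hx.2)).intervalIntegrable_of_Icc hx.1
  have hderiv : ∀ x ∈ Ico a b, HasDerivWithinAt (fun u => ∫ s in a..u, w s) (w x) (Ici x) x := by
    intro x hx
    have hnhds : Icc a b ∈ nhdsWithin x (Ioi x) := Icc_mem_nhdsGT_of_mem hx
    exact intervalIntegral.integral_hasDerivWithinAt_right (hwi x ⟨hx.1, hx.2.le⟩)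
      ⟨_, hnhds, hw.aestronglyMeasurable measurableSet_Icc⟩
      ((hw x ⟨hx.1, hx.2.le⟩).mono_of_mem_nhdsWithin hnhds)
  have hzero := eq_zero_of_abs_deriv_le_mul_abs_self_of_eq_zero_right (K := C)
    (intervalIntegral.continuousOn_primitive_interval
      (by rw [uIcc_of_le hab]; exact hw.integrableOn_Icc) |>.mono (uIcc_of_le hab).ge)
    hderiv intervalIntegral.integral_same fun x hx => by
      have hxI : x ∈ Icc a b := ⟨hx.1, hx.2.le⟩
      rw [Real.norm_of_nonneg (hw0 x hxI), Real.norm_of_nonneg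
        (intervalIntegral.integral_nonneg hx.1 fun s hs => hw0 s ⟨hs.1, hs.2.trans hxI.2⟩)]
      exact hle x hxI
  refine le_antisymm ?_ (hw0 t ht)
  simpa [hzero t ht] using hle t ht

theorem nonneg_of_volterraConv_le {k G y : ℝ → ℝ} {b c : ℝ} (hc : 0 ≤ c)
    (hkc : ContinuousOn k (Icc 0 b)) (hk : ∀ u ∈ Icc 0 b, 0 ≤ k u)
    (hGc : ContinuousOn G (Icc 0 b)) (hG : ∀ s ∈ Icc 0 b, -(c * (y s)⁻) ≤ G s)
    (hyc : ContinuousOn y (Icc 0 b)) (hy : ∀ t ∈ Icc 0 b, volterraConv k G t ≤ y t) :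
    ∀ t ∈ Icc 0 b, 0 ≤ y t := by
  obtain ⟨M, hM⟩ := isCompact_Icc.exists_bound_of_continuousOn hkc
  have hnegc : ContinuousOn (fun s => (y s)⁻) (Icc 0 b) := continuous_negPart.comp_continuousOn hyc
  suffices h : EqOn (fun s => (y s)⁻) 0 (Icc 0 b) from fun t ht => negPart_eq_zero.1 (h ht)
  refine eqOn_zero_of_le_mul_integral (C := M * c) hnegc (fun s _ => negPart_nonneg _)
    fun t ht => ?_
  have hsub : Icc 0 t ⊆ Icc 0 b := Icc_subset_Icc_right ht.2
  have hM0 : 0 ≤ M := (norm_nonneg _).trans (hM t ht)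
  have hbound : -(M * c * ∫ s in (0 : ℝ)..t, (y s)⁻) ≤ volterraConv k G t := by
    rw [← neg_mul, ← intervalIntegral.integral_const_mul]
    refine intervalIntegral.integral_mono_on ht.1
      (((hnegc.mono hsub).const_mul _).intervalIntegrable_of_Icc ht.1)
      ((continuousOn_volterra_integrand (hkc.mono hsub)
        (hGc.mono hsub)).intervalIntegrable_of_Icc ht.1) fun s hs => ?_
    have hts : t - s ∈ Icc 0 b := hsub ⟨sub_nonneg.2 hs.2, sub_le_self _ hs.1⟩
    have hcy : 0 ≤ c * (y s)⁻ := mul_nonneg hc (negPart_nonneg _)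
    calc -(M * c) * (y s)⁻ = -(M * (c * (y s)⁻)) := by ring
      _ ≤ -(k (t - s) * (c * (y s)⁻)) :=
        neg_le_neg (mul_le_mul_of_nonneg_right ((le_abs_self _).trans (hM _ hts)) hcy)
      _ = k (t - s) * -(c * (y s)⁻) := (mul_neg _ _).symm
      _ ≤ k (t - s) * G s := mul_le_mul_of_nonneg_left (hG s (hsub hs)) (hk _ hts)
  have hint : 0 ≤ ∫ s in (0 : ℝ)..t, (y s)⁻ :=
    intervalIntegral.integral_nonneg ht.1 fun s _ => negPart_nonneg _
  rw [negPart_def]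
  exact sup_le (by linarith [hy t ht]) (by positivity)

namespace IsCaputoSolution

variable {α y₀ y₁ b L lam : ℝ} {F y : ℝ → ℝ}

theorem mono {b' : ℝ} (h : IsCaputoSolution α y₀ y₁ b F y) (hb : b' ≤ b) :
    IsCaputoSolution α y₀ y₁ b' F y where
  continuousOn_rhs := h.continuousOn_rhs.mono (Icc_subset_Icc_right hb)
  continuousOn := h.continuousOn.mono (Icc_subset_Icc_right hb)
  eq_add_integral t ht := h.eq_add_integral t (Icc_subset_Icc_right hb ht)

theorem eq_add_volterraConv (h : IsCaputoSolution α y₀ y₁ b F y) {t : ℝ} (ht : t ∈ Icc 0 b) :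
    y t = y₀ + y₁ * t + volterraConv (rlKernel α) F t := by
  rw [volterraConv_rlKernel, h.eq_add_integral t ht]

theorem continuousOn_defect (h : IsCaputoSolution α y₀ y₁ b F y) (lam : ℝ) :
    ContinuousOn (fun s => F s - lam * y s) (Icc 0 b) :=
  h.continuousOn_rhs.sub (h.continuousOn.const_mul lam)

theorem eq_linearSolution_add_volterraConv (h : IsCaputoSolution α y₀ y₁ b F y) (hα : 1 ≤ α)
    (lam : ℝ) {t : ℝ} (ht : t ∈ Icc 0 b) :
    y t = linearSolution α lam y₀ y₁ t
      + volterraConv (mlKernel α α lam) (fun s => F s - lam * y s) t := by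
  have hα0 : 0 < α := zero_lt_one.trans_le hα
  have ht' := h.mono ht.2
  rw [linearSolution_eq_volterraConv hα lam y₀ y₁ ht.1]
  exact eq_add_volterraConv_resolvent ht.1 (continuous_rlKernel hα).continuousOn
    (continuous_mlKernel hα0 hα lam).continuousOn (by fun_prop) ht'.continuousOn_rhs
    ht'.continuousOn
    (fun u hu => mlKernel_eq_rlKernel_add_volterraConv hα0 hα0 lam hu.1)
    fun _ hs => ht'.eq_add_volterraConv hs

theorem linearSolution_le (h : IsCaputoSolution α y₀ y₁ b F y) (hα : 1 ≤ α) {t : ℝ}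
    (ht : t ∈ Icc 0 b) (hK : ∀ u ∈ Icc 0 t, 0 ≤ mlKernel α α lam u)
    (hF : ∀ s ∈ Icc 0 t, lam * y s ≤ F s) : linearSolution α lam y₀ y₁ t ≤ y t := by
  rw [h.eq_linearSolution_add_volterraConv hα lam ht]
  exact le_add_of_nonneg_right
    (volterraConv_nonneg ht.1 hK fun s hs => sub_nonneg.2 (hF s hs))

theorem le_linearSolution (h : IsCaputoSolution α y₀ y₁ b F y) (hα : 1 ≤ α) {t : ℝ}
    (ht : t ∈ Icc 0 b) (hK : ∀ u ∈ Icc 0 t, 0 ≤ mlKernel α α lam u)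
    (hF : ∀ s ∈ Icc 0 t, F s ≤ lam * y s) : y t ≤ linearSolution α lam y₀ y₁ t := by
  have hneg : 0 ≤ volterraConv (mlKernel α α lam) (fun s => -1 * (F s - lam * y s)) t :=
    volterraConv_nonneg ht.1 hK fun s hs => by linarith [hF s hs]
  rw [volterraConv_const_mul] at hneg
  linarith [h.eq_linearSolution_add_volterraConv hα lam ht]

theorem nonneg (h : IsCaputoSolution α y₀ y₁ b F y) (hα : 1 ≤ α) (hL : 0 ≤ L)
    (hK : ∀ u ∈ Icc 0 b, 0 ≤ mlKernel α α (-L) u)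
    (hlin : ∀ t ∈ Icc 0 b, 0 ≤ linearSolution α (-L) y₀ y₁ t)
    (hF : ∀ s ∈ Icc 0 b, -(L * |y s|) ≤ F s) : ∀ t ∈ Icc 0 b, 0 ≤ y t := by
  refine nonneg_of_volterraConv_le (c := 2 * L) (by positivity)
    (continuous_mlKernel (zero_lt_one.trans_le hα) hα (-L)).continuousOn hK
    (h.continuousOn_defect (-L)) (fun s hs => ?_) h.continuousOn fun t ht => ?_
  · calc -(2 * L * (y s)⁻) = -(L * ((y s)⁺ + (y s)⁻)) - -L * ((y s)⁺ - (y s)⁻) := by ring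
      _ = -(L * |y s|) - -L * y s := by rw [posPart_add_negPart, posPart_sub_negPart]
      _ ≤ F s - -L * y s := sub_le_sub_right (hF s hs) _
  · linarith [h.eq_linearSolution_add_volterraConv hα (-L) ht, hlin t ht]

end IsCaputoSolution

/-- The values `f τ x / x` with `τ ∈ [0, t]` and `x ≠ 0`, whose infimum and supremum are the rates
`a₋(t)` and `a*(t)`. -/
def slopeSet (f : ℝ → ℝ → ℝ) (t : ℝ) : Set ℝ :=
  {r | ∃ τ ∈ Icc (0 : ℝ) t, ∃ x : ℝ, x ≠ 0 ∧ r = f τ x / x}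

section SlopeSet

variable {f : ℝ → ℝ → ℝ} {L t : ℝ}

theorem slopeSet_nonempty (f : ℝ → ℝ → ℝ) (ht : 0 ≤ t) : (slopeSet f t).Nonempty :=
  ⟨_, 0, left_mem_Icc.2 ht, 1, one_ne_zero, rfl⟩

theorem slopeSet_subset_Icc (hf : ∀ τ ∈ Icc 0 t, ∀ x, |f τ x| ≤ L * |x|) :
    slopeSet f t ⊆ Icc (-L) L := by
  rintro r ⟨τ, hτ, x, hx, rfl⟩
  rw [mem_Icc, ← abs_le, abs_div, div_le_iff₀ (abs_pos.2 hx)]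
  exact hf τ hτ x

theorem sInf_slopeSet_mul_le (hf : ∀ τ ∈ Icc 0 t, ∀ x, |f τ x| ≤ L * |x|) {s x : ℝ}
    (hs : s ∈ Icc 0 t) (hx : 0 ≤ x) : sInf (slopeSet f t) * x ≤ f s x := by
  rcases hx.eq_or_lt with rfl | hpos
  · simpa using (abs_le.1 (hf s hs 0)).1
  · exact (le_div_iff₀ hpos).1
      (csInf_le (bddBelow_Icc.mono (slopeSet_subset_Icc hf)) ⟨s, hs, x, hpos.ne', rfl⟩)

theorem le_sSup_slopeSet_mul (hf : ∀ τ ∈ Icc 0 t, ∀ x, |f τ x| ≤ L * |x|) {s x : ℝ}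
    (hs : s ∈ Icc 0 t) (hx : 0 ≤ x) : f s x ≤ sSup (slopeSet f t) * x := by
  rcases hx.eq_or_lt with rfl | hpos
  · simpa using (abs_le.1 (hf s hs 0)).2
  · exact (div_le_iff₀ hpos).1
      (le_csSup (bddAbove_Icc.mono (slopeSet_subset_Icc hf)) ⟨s, hs, x, hpos.ne', rfl⟩)

end SlopeSet

theorem nonlinear_bounds_nonneg_data_general {α b L y₀ y₁ : ℝ} (hα : 1 ≤ α)
    {f : ℝ → ℝ → ℝ} (hf : ∀ t ∈ Icc 0 b, ∀ x, |f t x| ≤ L * |x|)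
    {y : ℝ → ℝ} (hy : IsCaputoSolution α y₀ y₁ b (fun s => f s (y s)) y)
    (hE : ∀ t ∈ Icc 0 b, 0 ≤ mlE α α (-L * t ^ α))
    (hlin : ∀ t ∈ Icc 0 b, 0 ≤ linearSolution α (-L) y₀ y₁ t) :
    ∀ t ∈ Icc 0 b, linearSolution α (sInf (slopeSet f t)) y₀ y₁ t ≤ y t ∧
      y t ≤ linearSolution α (sSup (slopeSet f t)) y₀ y₁ t := by
  intro t ht
  have hα0 : 0 ≤ α := zero_le_one.trans hα
  have hL : 0 ≤ L := by simpa using (abs_nonneg _).trans (hf t ht 1)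
  have hsub : Icc 0 t ⊆ Icc 0 b := Icc_subset_Icc_right ht.2
  have hft : ∀ s ∈ Icc 0 t, ∀ x, |f s x| ≤ L * |x| := fun s hs => hf s (hsub hs)
  have hK {lam : ℝ} (hlam : -L ≤ lam) : ∀ u ∈ Icc 0 b, 0 ≤ mlKernel α α lam u := fun u hu =>
    mul_nonneg (Real.rpow_nonneg hu.1 _) (mlE_mul_rpow_nonneg_of_neg_le
      (zero_lt_one.trans_le hα) hα0 hE hlam u hu)
  have hnn : ∀ s ∈ Icc 0 b, 0 ≤ y s :=
    hy.nonneg hα hL (hK le_rfl) hlin fun s hs => (abs_le.1 (hf s hs _)).1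
  have hslope := slopeSet_subset_Icc hft
  obtain ⟨r, hr⟩ := slopeSet_nonempty f ht.1
  have hinf : -L ≤ sInf (slopeSet f t) := le_csInf ⟨r, hr⟩ fun _ h => (hslope h).1
  have hsup : -L ≤ sSup (slopeSet f t) :=
    (hslope hr).1.trans (le_csSup (bddAbove_Icc.mono hslope) hr)
  exact ⟨hy.linearSolution_le hα ht (fun u hu => hK hinf u (hsub hu)) fun s hs =>
      sInf_slopeSet_mul_le hft hs (hnn s (hsub hs)),
    hy.le_linearSolution hα ht (fun u hu => hK hsup u (hsub hu)) fun s hs =>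
      le_sSup_slopeSet_mul hft hs (hnn s (hsub hs))⟩

/-- Nonlinear separation bounds for nonnegative initial data, under the
assumption `f(t,0) = 0` (Theorem 2.11(a) of the paper). -/
theorem nonlinear_bounds_nonneg_data
    (α T Tstar L y₀ y₁ : ℝ) (hα₁ : 1 < α) (hα₂ : α < 2) (hT : 0 < T) (hL : 0 < L)
    (f : ℝ → ℝ → ℝ)
    (hf_cont : ContinuousOn (fun p : ℝ × ℝ => f p.1 p.2) (Set.Icc 0 T ×ˢ Set.univ))
    (hf_lip : ∀ t ∈ Set.Icc (0 : ℝ) T, ∀ x z : ℝ, |f t x - f t z| ≤ L * |x - z|)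
    (hf0 : ∀ t ∈ Set.Icc (0 : ℝ) T, f t 0 = 0)
    (alow astar : ℝ → ℝ)
    (halow : ∀ t ∈ Set.Icc (0 : ℝ) T,
      alow t = sInf {r : ℝ | ∃ τ ∈ Set.Icc (0 : ℝ) t, ∃ x : ℝ, x ≠ 0 ∧ r = f τ x / x})
    (hastar : ∀ t ∈ Set.Icc (0 : ℝ) T,
      astar t = sSup {r : ℝ | ∃ τ ∈ Set.Icc (0 : ℝ) t, ∃ x : ℝ, x ≠ 0 ∧ r = f τ x / x})
    (y : ℝ → ℝ) (hy_cont : ContinuousOn y (Set.Icc 0 T))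
    (hy : ∀ t ∈ Set.Icc (0 : ℝ) T,
      y t = y₀ + y₁ * t
        + (1 / Real.Gamma α) * ∫ s in (0 : ℝ)..t, (t - s) ^ (α - 1) * f s (y s))
    (hy₀ : 0 ≤ y₀) (hy₁ : 0 ≤ y₁)
    (hTstar : 0 < Tstar) (hTstarT : Tstar ≤ T)
    (hcond : ∀ t ∈ Set.Icc (0 : ℝ) Tstar,
      mlE α α (-(L * t ^ α)) > 0 ∧ mlE α 2 (-(L * t ^ α)) > 0 ∧
        (mlE α 1 (-(L * t ^ α)) > 0 ∨ y₀ = 0)) :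
    ∀ t ∈ Set.Icc (0 : ℝ) Tstar,
      y₀ * mlE α 1 (alow t * t ^ α) + y₁ * (t * mlE α 2 (alow t * t ^ α)) ≤ y t ∧
        y t ≤ y₀ * mlE α 1 (astar t * t ^ α) + y₁ * (t * mlE α 2 (astar t * t ^ α)) := by
  have hsub : Icc 0 Tstar ⊆ Icc 0 T := Icc_subset_Icc_right hTstarT
  have hsol : IsCaputoSolution α y₀ y₁ T (fun s => f s (y s)) y :=
    ⟨hf_cont.comp (continuousOn_id.prodMk hy_cont) fun s hs => ⟨hs, mem_univ _⟩, hy_cont, hy⟩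
  have hgrowth : ∀ t ∈ Icc 0 Tstar, ∀ x, |f t x| ≤ L * |x| := fun t ht x => by
    simpa [hf0 t (hsub ht)] using hf_lip t (hsub ht) x 0
  simp only [← neg_mul] at hcond
  intro t ht
  rw [halow t (hsub ht), hastar t (hsub ht)]
  exact nonlinear_bounds_nonneg_data_general hα₁.le hgrowth (hsol.mono hTstarT)
    (fun s hs => (hcond s hs).1.le)
    (fun s hs => linearSolution_nonneg hs.1 hy₀ hy₁ ((hcond s hs).2.2.imp_left le_of_lt)
      (hcond s hs).2.1.le) t ht
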